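/- For every integer m ≥ 2 there is a constant C > 0, depending only on f, D and m, such that for every ν ∈ (0,1] and every t > 0, the solution satisfies ‖u(t)‖_m² ≤ C max(ν^{−(2m−1)}, t^{−(2m−1)}). -/

import Mathlib

open MeasureTheory Set
open scoped ENNReal

/-- The `L^p` norm (on the circle, i.e. over one period `(0,1]`) of the `m`-th
derivative of a function `v : ℝ → ℝ` (identified with a function on `S¹ = ℝ/ℤ`). -/
noncomputable def sobLp (m : ℕ) (p : ℝ≥0∞) (v : ℝ → ℝ) : ℝ :=
  (eLpNorm (iteratedDeriv m v) p (volume.restrict (Ioc (0:ℝ) 1))).toReal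

/-- `u` is a smooth, space-periodic, zero-mean-value solution of the generalised
Burgers equation `u_t + f'(u) u_x - ν u_xx = 0` with strongly convex `f` and
nonzero initial condition. -/
structure IsBurgersSolution (f : ℝ → ℝ) (σ ν : ℝ) (u : ℝ → ℝ → ℝ) : Prop where
  hf : ContDiff ℝ (⊤ : ℕ∞) f
  hσ : 0 < σ
  hconv : ∀ y, σ ≤ iteratedDeriv 2 f y
  hν : 0 < ν
  hu : ContDiffOn ℝ (⊤ : ℕ∞) (Function.uncurry u) (Ici (0:ℝ) ×ˢ univ)
  hper : ∀ t x, u t (x + 1) = u t x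
  hpde : ∀ t, 0 < t → ∀ x,
    deriv (fun s => u s x) t + deriv f (u t x) * deriv (u t) x
      - ν * deriv (deriv (u t)) x = 0
  hmean : ∀ t, 0 ≤ t → ∫ x in Ioc (0:ℝ) 1, u t x = 0
  hinit : ∃ x, u 0 x ≠ 0

/-- The quantity `D = max(|u₀|₁⁻¹, |u₀|_{1,∞})`. -/
noncomputable def burgersD (u : ℝ → ℝ → ℝ) : ℝ :=
  max (sobLp 0 1 (u 0))⁻¹ (sobLp 1 ⊤ (u 0))

/-- `T₁ = D⁻² C̃⁻¹ / 4`. -/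
noncomputable def burgersT₁ (D Ct : ℝ) : ℝ := (D ^ 2)⁻¹ * Ct⁻¹ / 4

/-- `T₂ = max(3T₁/2, 2Dσ⁻¹)`. -/
noncomputable def burgersT₂ (σ D Ct : ℝ) : ℝ :=
  max (3 / 2 * burgersT₁ D Ct) (2 * D * σ⁻¹)

/-- Time average over `[T₁, T₂]`. -/
noncomputable def timeAvg (T₁ T₂ : ℝ) (A : ℝ → ℝ) : ℝ :=
  (T₂ - T₁)⁻¹ * ∫ t in T₁..T₂, A t

/-- The structure function `S_p(ℓ)`. -/
noncomputable def structFun (T₁ T₂ : ℝ) (u : ℝ → ℝ → ℝ) (p ℓ : ℝ) : ℝ :=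
  timeAvg T₁ T₂ (fun t => ∫ x in Ioc (0:ℝ) 1, |u t (x + ℓ) - u t x| ^ p)



/-! ### Fixed-time lemmas -/

lemma bg_smooth_it {v : ℝ → ℝ} (hv : ContDiff ℝ (⊤ : ℕ∞) v) (k : ℕ) :
    ContDiff ℝ (⊤ : ℕ∞) (iteratedDeriv k v) := by
  rw [iteratedDeriv_eq_iterate]
  exact ContDiff.iterate_deriv k hv

lemma bg_cont_it {v : ℝ → ℝ} (hv : ContDiff ℝ (⊤ : ℕ∞) v) (k : ℕ) :
    Continuous (iteratedDeriv k v) := (bg_smooth_it hv k).continuous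

lemma bg_hasDeriv_it {v : ℝ → ℝ} (hv : ContDiff ℝ (⊤ : ℕ∞) v) (k : ℕ) (x : ℝ) :
    HasDerivAt (iteratedDeriv k v) (iteratedDeriv (k+1) v x) x := by
  rw [iteratedDeriv_succ]
  exact ((bg_smooth_it hv k).differentiable (by simp) x).hasDerivAt

lemma bg_per_it {v : ℝ → ℝ} (hp : ∀ x, v (x + 1) = v x) (k : ℕ) (x : ℝ) :
    iteratedDeriv k v (x + 1) = iteratedDeriv k v x := by
  have h := congrFun (iteratedDeriv_comp_add_const k v 1) x
  have h2 : (fun z => v (z + 1)) = v := funext hp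
  rw [h2] at h
  exact h.symm

lemma bg_CS {f g : ℝ → ℝ} (hf : Continuous f) (hg : Continuous g) :
    (∫ x in (0:ℝ)..1, f x * g x) ^ 2
      ≤ (∫ x in (0:ℝ)..1, f x ^ 2) * (∫ x in (0:ℝ)..1, g x ^ 2) := by
  have key : ∀ s : ℝ, 0 ≤ (∫ x in (0:ℝ)..1, g x ^ 2) * (s * s)
      + (2 * ∫ x in (0:ℝ)..1, f x * g x) * s + ∫ x in (0:ℝ)..1, f x ^ 2 := by
    intro s
    have h0 : 0 ≤ ∫ x in (0:ℝ)..1, (g x ^ 2 * (s*s) + 2 * (f x * g x) * s + f x ^ 2) := by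
      apply intervalIntegral.integral_nonneg (by norm_num)
      intro x _
      nlinarith [sq_nonneg (f x + s * g x)]
    rw [intervalIntegral.integral_add (Continuous.intervalIntegrable (by fun_prop) _ _)
      (Continuous.intervalIntegrable (by fun_prop) _ _),
      intervalIntegral.integral_add (Continuous.intervalIntegrable (by fun_prop) _ _)
      (Continuous.intervalIntegrable (by fun_prop) _ _),
      intervalIntegral.integral_mul_const, intervalIntegral.integral_mul_const,
      intervalIntegral.integral_const_mul] at h0
    exact h0
  have := discrim_le_zero key
  unfold discrim at this
  nlinarith

lemma bg_ibp {f f' g g' : ℝ → ℝ} (hf : ∀ x, HasDerivAt f (f' x) x)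
    (hg : ∀ x, HasDerivAt g (g' x) x) (cf : Continuous f') (cg : Continuous g')
    (pf : f 1 = f 0) (pg : g 1 = g 0) :
    ∫ x in (0:ℝ)..1, f x * g' x = - ∫ x in (0:ℝ)..1, f' x * g x := by
  rw [intervalIntegral.integral_mul_deriv_eq_deriv_mul (fun x _ => hf x) (fun x _ => hg x)
    (cf.intervalIntegrable _ _) (cg.intervalIntegrable _ _), pf, pg]
  ring

/-- squared `L²` norm of the `k`-th derivative -/
noncomputable def bgB (v : ℝ → ℝ) (k : ℕ) : ℝ := ∫ x in (0:ℝ)..1, (iteratedDeriv k v x) ^ 2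

lemma bgB_nonneg (v : ℝ → ℝ) (k : ℕ) : 0 ≤ bgB v k :=
  intervalIntegral.integral_nonneg (by norm_num) (fun _ _ => sq_nonneg _)

lemma bg_per0 {v : ℝ → ℝ} (hp : ∀ x, v (x + 1) = v x) (k : ℕ) :
    iteratedDeriv k v 1 = iteratedDeriv k v 0 := by
  have := bg_per_it hp k 0
  simpa using this

lemma bgB_interp {v : ℝ → ℝ} (hv : ContDiff ℝ (⊤ : ℕ∞) v) (hp : ∀ x, v (x + 1) = v x) (k : ℕ) :
    bgB v (k+1) ^ 2 ≤ bgB v k * bgB v (k+2) := by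
  have h := bg_ibp (bg_hasDeriv_it hv k) (bg_hasDeriv_it hv (k+1)) (bg_cont_it hv _)
    (bg_cont_it hv _) (bg_per0 hp k) (bg_per0 hp (k+1))
  have h2 := bg_CS (bg_cont_it hv k) (bg_cont_it hv (k+2))
  have h3 : bgB v (k+1) = ∫ x in (0:ℝ)..1, iteratedDeriv (k+1) v x * iteratedDeriv (k+1) v x := by
    unfold bgB; congr 1; ext x; ring
  have h4 : bgB v (k+1) = - ∫ x in (0:ℝ)..1, iteratedDeriv k v x * iteratedDeriv (k+2) v x := by
    rw [h3]; rw [show k+2 = k+1+1 from rfl, h]; ring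
  rw [h4, neg_sq]
  exact h2

/-- A `C¹` function with a zero on `[0,1]` is bounded by the `L¹` norm of its derivative. -/
lemma bg_sup_of_zero {f f' : ℝ → ℝ} (hf : ∀ x, HasDerivAt f (f' x) x) (cf : Continuous f')
    {z : ℝ} (hz : z ∈ Icc (0:ℝ) 1) (hfz : f z = 0) {x : ℝ} (hx : x ∈ Icc (0:ℝ) 1) :
    |f x| ≤ ∫ y in (0:ℝ)..1, |f' y| := by
  have h1 : ∫ y in z..x, f' y = f x - f z :=
    intervalIntegral.integral_eq_sub_of_hasDerivAt (fun y _ => hf y) (cf.intervalIntegrable _ _)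
  rw [hfz, sub_zero] at h1
  rw [← h1, ← Real.norm_eq_abs]
  refine (intervalIntegral.norm_integral_le_abs_integral_norm).trans ?_
  have h2 : |∫ y in z..x, ‖f' y‖| ≤ |∫ y in (0:ℝ)..1, ‖f' y‖| := by
    apply intervalIntegral.abs_integral_mono_interval
    · rw [uIoc_of_le (zero_le_one)]
      intro y hy
      rw [mem_uIoc] at hy
      rcases hy with hy | hy
      · exact ⟨lt_of_le_of_lt hz.1 hy.1, hy.2.trans hx.2⟩
      · exact ⟨lt_of_le_of_lt hx.1 hy.1, hy.2.trans hz.2⟩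
    · exact Filter.Eventually.of_forall (fun y => norm_nonneg _)
    · exact (cf.norm).intervalIntegrable _ _
  refine h2.trans (le_of_eq ?_)
  rw [abs_of_nonneg]
  · rfl
  · exact intervalIntegral.integral_nonneg (by norm_num) (fun _ _ => norm_nonneg _)

lemma bg_zero_it {v : ℝ → ℝ} (hv : ContDiff ℝ (⊤ : ℕ∞) v) (hp : ∀ x, v (x + 1) = v x) (k : ℕ) :
    ∃ z ∈ Icc (0:ℝ) 1, iteratedDeriv (k+1) v z = 0 := by
  obtain ⟨z, hz, h⟩ := exists_deriv_eq_zero (zero_lt_one) (bg_cont_it hv k).continuousOn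
    (bg_per0 hp k).symm
  exact ⟨z, Ioo_subset_Icc_self hz, by rw [iteratedDeriv_succ]; exact h⟩

lemma bg_zero_mean {v : ℝ → ℝ} (hv : Continuous v) (hm : ∫ x in (0:ℝ)..1, v x = 0) :
    ∃ z ∈ Icc (0:ℝ) 1, v z = 0 := by
  have hd : ∀ x, HasDerivAt (fun y => ∫ s in (0:ℝ)..y, v s) (v x) x := fun x =>
    intervalIntegral.integral_hasDerivAt_right (hv.intervalIntegrable _ _)
      (hv.stronglyMeasurableAtFilter _ _) hv.continuousAt
  obtain ⟨z, hz, h⟩ := exists_hasDerivAt_eq_zero (f := fun y => ∫ s in (0:ℝ)..y, v s) (f' := v)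
    (zero_lt_one) (fun x _ => (hd x).continuousAt.continuousWithinAt) (by simp [hm])
    (fun x _ => hd x)
  exact ⟨z, Ioo_subset_Icc_self hz, h⟩

/-- `|v^{(k)}|_∞^4 ≤ 4 b_k b_{k+1}` for `k ≥ 1`. -/
lemma bg_sup_it {v : ℝ → ℝ} (hv : ContDiff ℝ (⊤ : ℕ∞) v) (hp : ∀ x, v (x + 1) = v x) (k : ℕ)
    {x : ℝ} (hx : x ∈ Icc (0:ℝ) 1) :
    (iteratedDeriv (k+1) v x) ^ 4 ≤ 4 * bgB v (k+1) * bgB v (k+2) := by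
  obtain ⟨z, hz, hz0⟩ := bg_zero_it hv hp k
  have hd : ∀ x, HasDerivAt (fun y => iteratedDeriv (k+1) v y ^ 2)
      (2 * iteratedDeriv (k+1) v x * iteratedDeriv (k+2) v x) x := by
    intro x
    have := (bg_hasDeriv_it hv (k+1) x).fun_pow 2
    simpa using this
  have c1 := bg_cont_it hv (k+1)
  have c2 := bg_cont_it hv (k+2)
  have h := bg_sup_of_zero hd (by fun_prop) hz (by simp [hz0]) hx
  have e : ∫ y in (0:ℝ)..1, |2 * iteratedDeriv (k+1) v y * iteratedDeriv (k+2) v y|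
      = 2 * ∫ y in (0:ℝ)..1, |iteratedDeriv (k+1) v y| * |iteratedDeriv (k+2) v y| := by
    rw [← intervalIntegral.integral_const_mul]
    congr 1; ext y; rw [abs_mul, abs_mul]; simp; ring
  rw [e] at h
  have h2 := bg_CS c1.abs c2.abs
  simp only [sq_abs] at h2
  have h3 : |iteratedDeriv (k+1) v x ^ 2| = iteratedDeriv (k+1) v x ^ 2 := abs_of_nonneg (sq_nonneg _)
  rw [h3] at h
  have h4 := pow_le_pow_left₀ (sq_nonneg _) h 2
  unfold bgB
  nlinarith

structure BgAdm (B : ℝ) (v : ℝ → ℝ) : Prop where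
  hv : ContDiff ℝ (⊤ : ℕ∞) v
  hp : ∀ x, v (x + 1) = v x
  hm : ∫ x in (0:ℝ)..1, v x = 0
  hB : 0 ≤ B
  hd : ∀ x, deriv v x ≤ B

lemma BgAdm.L1 {B : ℝ} {v : ℝ → ℝ} (h : BgAdm B v) :
    ∫ x in (0:ℝ)..1, |iteratedDeriv 1 v x| ≤ 2 * B := by
  have c := bg_cont_it h.hv 1
  have h1 : ∫ x in (0:ℝ)..1, |iteratedDeriv 1 v x|
      ≤ ∫ x in (0:ℝ)..1, (2 * B - iteratedDeriv 1 v x) := by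
    apply intervalIntegral.integral_mono_on (by norm_num)
      (Continuous.intervalIntegrable (by fun_prop) _ _)
      (Continuous.intervalIntegrable (by fun_prop) _ _)
    intro x _
    have := h.hd x
    rw [← iteratedDeriv_one] at this
    rw [abs_le]
    constructor <;> linarith [h.hB]
  have h2 : ∫ y in (0:ℝ)..1, iteratedDeriv 1 v y = iteratedDeriv 0 v 1 - iteratedDeriv 0 v 0 :=
    intervalIntegral.integral_eq_sub_of_hasDerivAt (fun y _ => bg_hasDeriv_it h.hv 0 y)
      (c.intervalIntegrable _ _)
  rw [intervalIntegral.integral_sub (Continuous.intervalIntegrable (by fun_prop) _ _)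
    (c.intervalIntegrable _ _), h2, bg_per0 h.hp] at h1
  simpa using h1

lemma BgAdm.sup {B : ℝ} {v : ℝ → ℝ} (h : BgAdm B v) {x : ℝ} (hx : x ∈ Icc (0:ℝ) 1) :
    |v x| ≤ 2 * B := by
  obtain ⟨z, hz, hz0⟩ := bg_zero_mean h.hv.continuous h.hm
  have := bg_sup_of_zero (bg_hasDeriv_it h.hv 0) (bg_cont_it h.hv 1) hz (by simpa using hz0) hx
  simpa using this.trans h.L1

lemma BgAdm.base {B : ℝ} {v : ℝ → ℝ} (h : BgAdm B v) :
    bgB v 1 ^ 3 ≤ (64 * B ^ 4) * bgB v 2 := by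
  set P := 4 * bgB v 1 * bgB v 2 with hP
  have hPn : 0 ≤ P := by have := bgB_nonneg v 1; have := bgB_nonneg v 2; positivity
  have c := bg_cont_it h.hv 1
  obtain ⟨S, hS0, hS⟩ : ∃ S : ℝ, 0 ≤ S ∧ S ^ 4 = P :=
    ⟨P ^ ((4:ℝ)⁻¹), by positivity, by
      rw [← Real.rpow_natCast, ← Real.rpow_mul hPn]; norm_num⟩
  have hsup : ∀ x ∈ Icc (0:ℝ) 1, |iteratedDeriv 1 v x| ≤ S := by
    intro x hx
    have := bg_sup_it h.hv h.hp 0 hx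
    simp only [zero_add] at this
    rw [← hP, ← hS] at this
    apply le_of_pow_le_pow_left₀ (n := 4) (by norm_num) hS0
    rw [Even.pow_abs (by decide)]
    exact this
  have h1 : bgB v 1 ≤ S * (2 * B) := by
    refine le_trans ?_ (mul_le_mul_of_nonneg_left h.L1 hS0)
    rw [← intervalIntegral.integral_const_mul]
    apply intervalIntegral.integral_mono_on (by norm_num)
      (Continuous.intervalIntegrable (by fun_prop) _ _)
      (Continuous.intervalIntegrable (by fun_prop) _ _)
    intro x hx
    rw [← sq_abs, sq]
    exact mul_le_mul_of_nonneg_right (hsup x hx) (abs_nonneg _)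
  have h2 := pow_le_pow_left₀ (bgB_nonneg v 1) h1 4
  rw [mul_pow, hS, hP] at h2
  rcases (bgB_nonneg v 1).eq_or_lt with h0 | h0
  · rw [← h0, zero_pow (by norm_num)]
    have := bgB_nonneg v 2
    positivity
  · refine le_of_mul_le_mul_left ?_ h0
    nlinarith

/-- `b_{k+1}^{2k+3} ≤ K b_{k+2}^{2k+1}` -/
lemma BgAdm.chain {B : ℝ} {v : ℝ → ℝ} (h : BgAdm B v) (k : ℕ) :
    bgB v (k+1) ^ (2*k+3) ≤ (64 * B ^ 4) * bgB v (k+2) ^ (2*k+1) := by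
  induction k with
  | zero => simpa using h.base
  | succ k ih =>
    have hi := bgB_interp h.hv h.hp (k+1)
    have n1 := bgB_nonneg v (k+1)
    have n2 := bgB_nonneg v (k+1+1)
    have n3 := bgB_nonneg v (k+1+2)
    have hB := h.hB
    rcases n2.eq_or_lt with h0 | h0
    · rw [← h0, zero_pow (by omega)]
      positivity
    · have h1 := pow_le_pow_left₀ (sq_nonneg _) hi (2*k+3)
      rw [mul_pow] at h1
      have h2 := h1.trans (mul_le_mul_of_nonneg_right ih (by positivity))
      refine le_of_mul_le_mul_left ?_ (pow_pos h0 (2*k+1))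
      calc bgB v (k+1+1) ^ (2*k+1) * bgB v (k+1+1) ^ (2*(k+1)+3)
          = (bgB v (k+1+1) ^ 2) ^ (2*k+3) := by rw [← pow_add, ← pow_mul]; congr 1; ring
        _ ≤ _ := h2
        _ = _ := by
          rw [show k+2 = k+1+1 from rfl, show 2*k+3 = 2*(k+1)+1 from by ring]; ring

/-- The scale `N` attached to `v` at level `M+1`. -/
structure BgScale (B : ℝ) (M : ℕ) (v : ℝ → ℝ) (N : ℝ) : Prop where
  adm : BgAdm B v
  hN : 0 ≤ N
  hNe : N ^ (2*M+1) = bgB v (M+1)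

lemma bg_scale_B (B : ℝ) (M : ℕ) (d : ℕ) : ∀ j, j + d = M → ∃ C : ℝ, 0 ≤ C ∧
    ∀ v N, BgScale B M v N → bgB v (j+1) ≤ C * N ^ (2*j+1) := by
  induction d with
  | zero =>
    intro j hj
    refine ⟨1, zero_le_one, fun v N h => ?_⟩
    have : j = M := by omega
    rw [this, h.hNe, one_mul]
  | succ d ih =>
    intro j hj
    obtain ⟨C, hC, H⟩ := ih (j+1) (by omega)
    set C' := max 1 ((64 * B ^ 4) * C ^ (2*j+1)) with hC'
    have h1 : 1 ≤ C' := le_max_left _ _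
    refine ⟨C', by linarith, fun v N h => ?_⟩
    have h2 := H v N h
    have hN := h.hN
    have h3 := h.adm.chain j
    have h4 := pow_le_pow_left₀ (bgB_nonneg v (j+1+1)) h2 (2*j+1)
    apply le_of_pow_le_pow_left₀ (n := 2*j+3) (by omega) (by positivity)
    calc bgB v (j+1) ^ (2*j+3) ≤ (64 * B ^ 4) * bgB v (j+2) ^ (2*j+1) := h3
      _ ≤ (64 * B ^ 4) * (C * N ^ (2*(j+1)+1)) ^ (2*j+1) :=
          mul_le_mul_of_nonneg_left h4 (by have := h.adm.hB; positivity)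
      _ = ((64 * B ^ 4) * C ^ (2*j+1)) * (N ^ (2*j+1)) ^ (2*j+3) := by
          rw [mul_pow, ← pow_mul, ← pow_mul, show (2*(j+1)+1) * (2*j+1) = (2*j+1)*(2*j+3) by ring]
          ring
      _ ≤ C' ^ (2*j+3) * (N ^ (2*j+1)) ^ (2*j+3) := by
          apply mul_le_mul_of_nonneg_right _ (by positivity)
          exact (le_max_right _ _).trans (le_self_pow₀ h1 (by omega))
      _ = _ := by rw [← mul_pow]

lemma bg_scale_sup (B : ℝ) (M : ℕ) (j : ℕ) (hj : j ≤ M) : ∃ C : ℝ, 0 ≤ C ∧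
    ∀ v N, BgScale B M v N → ∀ x ∈ Icc (0:ℝ) 1, |iteratedDeriv j v x| ≤ C * N ^ j := by
  rcases j with _ | i
  · refine ⟨2 * |B|, by positivity, fun v N h x hx => ?_⟩
    have := h.adm.sup hx
    rw [abs_of_nonneg h.adm.hB]
    simpa using this
  · obtain ⟨C1, hC1, H1⟩ := bg_scale_B B M (M - i) i (by omega)
    obtain ⟨C2, hC2, H2⟩ := bg_scale_B B M (M - (i+1)) (i+1) (by omega)
    set C' := max 1 (4 * C1 * C2) with hC'
    have h1 : 1 ≤ C' := le_max_left _ _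
    refine ⟨C', by linarith, fun v N h x hx => ?_⟩
    have hN := h.hN
    apply le_of_pow_le_pow_left₀ (n := 4) (by norm_num) (by positivity)
    rw [Even.pow_abs (by decide)]
    have h3 := bg_sup_it h.adm.hv h.adm.hp i hx
    calc iteratedDeriv (i+1) v x ^ 4 ≤ 4 * bgB v (i+1) * bgB v (i+2) := h3
      _ ≤ 4 * (C1 * N ^ (2*i+1)) * (C2 * N ^ (2*(i+1)+1)) := by
          have := H1 v N h
          have := H2 v N h
          have := bgB_nonneg v (i+1)
          have := bgB_nonneg v (i+2)
          gcongr
      _ = (4 * C1 * C2) * (N ^ (i+1)) ^ 4 := by ring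
      _ ≤ C' ^ 4 * (N ^ (i+1)) ^ 4 := by
          apply mul_le_mul_of_nonneg_right _ (by positivity)
          exact (le_max_right _ _).trans (le_self_pow₀ h1 (by omega))
      _ = _ := by rw [← mul_pow]

lemma bg_leibniz {g v : ℝ → ℝ} (hg : ContDiff ℝ (⊤ : ℕ∞) g) (hv : ContDiff ℝ (⊤ : ℕ∞) v)
    (k : ℕ) (x : ℝ) :
    iteratedDeriv (k+1) (fun y => g (v y)) x = ∑ i ∈ Finset.range (k+1),
      (k.choose i : ℝ) * iteratedDeriv i (fun y => deriv g (v y)) x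
        * iteratedDeriv (k - i + 1) v x := by
  have hg' : ContDiff ℝ (⊤ : ℕ∞) (deriv g) := by
    simpa using bg_smooth_it hg 1
  have hv' : ContDiff ℝ (⊤ : ℕ∞) (deriv v) := by
    simpa using bg_smooth_it hv 1
  have e : deriv (fun y => g (v y)) = (fun y => deriv g (v y)) * deriv v := by
    ext y
    have := ((hg.differentiable (by simp) (v y)).hasDerivAt.comp y
      (hv.differentiable (by simp) y).hasDerivAt).deriv
    simpa [Function.comp_def] using this
  rw [iteratedDeriv_succ', e, iteratedDeriv_mul]
  · apply Finset.sum_congr rfl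
    intro i _
    rw [iteratedDeriv_succ']
  · exact ((hg'.comp hv).of_le (by exact_mod_cast le_top)).contDiffAt
  · exact (hv'.of_le (by exact_mod_cast le_top)).contDiffAt

lemma bg_scale_comp (B : ℝ) (M : ℕ) (k : ℕ) : k ≤ M → ∀ g : ℝ → ℝ, ContDiff ℝ (⊤ : ℕ∞) g →
    ∃ C : ℝ, 0 ≤ C ∧ ∀ v N, BgScale B M v N → ∀ x ∈ Icc (0:ℝ) 1,
      |iteratedDeriv k (fun y => g (v y)) x| ≤ C * N ^ k := by
  induction k using Nat.strong_induction_on with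
  | _ k ih =>
  intro hk g hg
  rcases k with _ | k
  · obtain ⟨C, hC⟩ := (isCompact_Icc (a := -(2 * B)) (b := 2 * B)).exists_bound_of_continuousOn
      hg.continuous.continuousOn
    refine ⟨|C|, abs_nonneg _, fun v N h x hx => ?_⟩
    have := hC (v x) (abs_le.mp (h.adm.sup hx))
    simpa using this.trans (le_abs_self C)
  · have hg' : ContDiff ℝ (⊤ : ℕ∞) (deriv g) := by
      simpa using bg_smooth_it hg 1
    have h1 : ∀ i : ℕ, ∃ C : ℝ, 0 ≤ C ∧ (i ≤ k → ∀ v N, BgScale B M v N → ∀ x ∈ Icc (0:ℝ) 1,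
      |iteratedDeriv i (fun y => deriv g (v y)) x| ≤ C * N ^ i) := by
      intro i
      by_cases hi : i ≤ k
      · obtain ⟨C, hC, H⟩ := ih i (by omega) (by omega) _ hg'
        exact ⟨C, hC, fun _ => H⟩
      · exact ⟨0, le_rfl, fun h => absurd h hi⟩
    have h2 : ∀ i : ℕ, ∃ C : ℝ, 0 ≤ C ∧ (i ≤ M → ∀ v N, BgScale B M v N → ∀ x ∈ Icc (0:ℝ) 1,
      |iteratedDeriv i v x| ≤ C * N ^ i) := by
      intro i
      by_cases hi : i ≤ M
      · obtain ⟨C, hC, H⟩ := bg_scale_sup B M i hi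
        exact ⟨C, hC, fun _ => H⟩
      · exact ⟨0, le_rfl, fun h => absurd h hi⟩
    choose C1 hC1 H1 using h1
    choose C2 hC2 H2 using h2
    refine ⟨∑ i ∈ Finset.range (k+1), (k.choose i : ℝ) * C1 i * C2 (k - i + 1),
      Finset.sum_nonneg fun i _ => by have := hC1 i; have := hC2 (k-i+1); positivity,
      fun v N h x hx => ?_⟩
    rw [bg_leibniz hg h.adm.hv, Finset.sum_mul]
    refine (Finset.abs_sum_le_sum_abs _ _).trans (Finset.sum_le_sum fun i hi => ?_)
    have hi' : i ≤ k := by simpa [Nat.lt_succ_iff] using hi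
    rw [abs_mul, abs_mul, Nat.abs_cast]
    have a1 := H1 i hi' v N h x hx
    have a2 := H2 (k-i+1) (by omega) v N h x hx
    have hN := h.hN
    have := hC1 i
    calc _ ≤ (k.choose i : ℝ) * (C1 i * N ^ i) * (C2 (k-i+1) * N ^ (k-i+1)) := by
          gcongr
      _ = (k.choose i : ℝ) * C1 i * C2 (k-i+1) * N ^ (i + (k-i+1)) := by rw [pow_add]; ring
      _ = _ := by rw [show i + (k-i+1) = k+1 by omega]

lemma bg_smooth_comp {g v : ℝ → ℝ} (hg : ContDiff ℝ (⊤ : ℕ∞) g) (hv : ContDiff ℝ (⊤ : ℕ∞) v) :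
    ContDiff ℝ (⊤ : ℕ∞) (fun y => g (v y)) := hg.comp hv

lemma bg_scale_L2 (B : ℝ) (M : ℕ) (g : ℝ → ℝ) (hg : ContDiff ℝ (⊤ : ℕ∞) g) :
    ∃ C : ℝ, 0 ≤ C ∧ ∀ v N, BgScale B M v N →
      bgB (fun y => g (v y)) (M+1) ≤ C * bgB v (M+1) := by
  have hg' : ContDiff ℝ (⊤ : ℕ∞) (deriv g) := by
    simpa using bg_smooth_it hg 1
  have h1 : ∀ i : ℕ, ∃ C : ℝ, 0 ≤ C ∧ (i ≤ M → ∀ v N, BgScale B M v N → ∀ x ∈ Icc (0:ℝ) 1,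
    |iteratedDeriv i (fun y => deriv g (v y)) x| ≤ C * N ^ i) := by
    intro i
    by_cases hi : i ≤ M
    · obtain ⟨C, hC, H⟩ := bg_scale_comp B M i hi _ hg'
      exact ⟨C, hC, fun _ => H⟩
    · exact ⟨0, le_rfl, fun h => absurd h hi⟩
  have h2 : ∀ i : ℕ, ∃ C : ℝ, 0 ≤ C ∧ (i ≤ M → ∀ v N, BgScale B M v N →
    bgB v (i+1) ≤ C * N ^ (2*i+1)) := by
    intro i
    by_cases hi : i ≤ M
    · obtain ⟨C, hC, H⟩ := bg_scale_B B M (M-i) i (by omega)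
      exact ⟨C, hC, fun _ => H⟩
    · exact ⟨0, le_rfl, fun h => absurd h hi⟩
  choose C1 hC1 H1 using h1
  choose C2 hC2 H2 using h2
  refine ⟨(M+1) * ∑ i ∈ Finset.range (M+1), ((M.choose i : ℝ) * C1 i) ^ 2 * C2 (M - i),
    mul_nonneg (by positivity) (Finset.sum_nonneg fun i _ => by have := hC2 (M-i); positivity),
    fun v N h => ?_⟩
  have hv := h.adm.hv
  have hN := h.hN
  have cc : Continuous (iteratedDeriv (M+1) (fun y => g (v y))) := bg_cont_it (bg_smooth_comp hg hv) _
  have step : bgB (fun y => g (v y)) (M+1) ≤ ∫ x in (0:ℝ)..1, (M+1) *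
      ∑ i ∈ Finset.range (M+1), ((M.choose i : ℝ) * (C1 i * N ^ i)) ^ 2
        * iteratedDeriv (M-i+1) v x ^ 2 := by
    apply intervalIntegral.integral_mono_on (by norm_num)
      (Continuous.intervalIntegrable (by fun_prop) _ _)
    · apply Continuous.intervalIntegrable
      refine continuous_const.mul (continuous_finsetSum _ fun i _ => ?_)
      exact continuous_const.mul ((bg_cont_it hv _).pow 2)
    intro x hx
    rw [bg_leibniz hg hv]
    refine (sq_sum_le_card_mul_sum_sq).trans ?_
    rw [Finset.card_range]
    push_cast
    refine mul_le_mul_of_nonneg_left (Finset.sum_le_sum fun i hi => ?_) (by positivity)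
    have hi' : i ≤ M := by simpa [Nat.lt_succ_iff] using hi
    rw [mul_pow]
    refine mul_le_mul_of_nonneg_right ?_ (sq_nonneg _)
    rw [← sq_abs, abs_mul, Nat.abs_cast]
    have := H1 i hi' v N h x hx
    gcongr
  refine step.trans ?_
  rw [intervalIntegral.integral_const_mul, intervalIntegral.integral_finsetSum, mul_assoc,
    Finset.sum_mul]
  · refine mul_le_mul_of_nonneg_left (Finset.sum_le_sum fun i hi => ?_) (by positivity)
    have hi' : i ≤ M := by simpa [Nat.lt_succ_iff] using hi
    rw [intervalIntegral.integral_const_mul]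
    have h3 := H2 (M-i) (by omega) v N h
    calc _ ≤ ((M.choose i : ℝ) * (C1 i * N ^ i)) ^ 2 * (C2 (M-i) * N ^ (2*(M-i)+1)) :=
          mul_le_mul_of_nonneg_left h3 (sq_nonneg _)
      _ = ((M.choose i : ℝ) * C1 i) ^ 2 * C2 (M-i) * N ^ (2*i + (2*(M-i)+1)) := by
          rw [pow_add, pow_mul']; ring
      _ = _ := by rw [show 2*i + (2*(M-i)+1) = 2*M+1 by omega, h.hNe]
  · intro i _
    exact (continuous_const.mul ((bg_cont_it hv _).pow 2)).intervalIntegrable _ _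

/-- Energy dissipation estimate at a fixed time. -/
lemma bg_energy (B : ℝ) (M : ℕ) (f : ℝ → ℝ) (hf : ContDiff ℝ (⊤ : ℕ∞) f) :
    ∃ C : ℝ, 0 < C ∧ ∀ v, BgAdm B v → ∀ ν, 0 < ν →
      2 * ∫ x in (0:ℝ)..1, iteratedDeriv (M+1) v x *
        (ν * iteratedDeriv (M+3) v x - iteratedDeriv (M+2) (fun y => f (v y)) x)
      ≤ - ν * bgB v (M+2) + C / ν * bgB v (M+1) := by
  obtain ⟨C, hC, H⟩ := bg_scale_L2 B M f hf
  refine ⟨C + 1, by linarith, fun v h ν hν => ?_⟩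
  have hv := h.hv
  have b1 := bgB_nonneg v (M+1)
  have b2 := bgB_nonneg v (M+2)
  have hs : BgScale B M v (bgB v (M+1) ^ (((2*M+1 : ℕ) : ℝ)⁻¹)) :=
    ⟨h, by positivity, by rw [Real.rpow_inv_natCast_pow b1 (by omega)]⟩
  have h1 := H v _ hs
  have hw : ContDiff ℝ (⊤ : ℕ∞) (fun y => f (v y)) := bg_smooth_comp hf hv
  have hwp : ∀ x, (fun y => f (v y)) (x + 1) = (fun y => f (v y)) x := fun x => by simp [h.hp]
  have e1 := bg_ibp (bg_hasDeriv_it hv (M+1)) (bg_hasDeriv_it hv (M+2)) (bg_cont_it hv _)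
    (bg_cont_it hv _) (bg_per0 h.hp _) (bg_per0 h.hp _)
  have e2 := bg_ibp (bg_hasDeriv_it hv (M+1)) (bg_hasDeriv_it hw (M+1)) (bg_cont_it hv _)
    (bg_cont_it hw _) (bg_per0 h.hp _) (bg_per0 hwp _)
  have c1 := bg_cont_it hv (M+1)
  have c2 := bg_cont_it hv (M+2)
  have c3 := bg_cont_it hv (M+3)
  have c4 := bg_cont_it hw (M+2)
  have c5 := bg_cont_it hw (M+1)
  have cs := bg_CS c2 c5
  have e3 : ∫ x in (0:ℝ)..1, iteratedDeriv (M+2) v x * iteratedDeriv (M+2) v x = bgB v (M+2) := by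
    unfold bgB; congr 1; ext x; ring
  have e0 : ∫ x in (0:ℝ)..1, iteratedDeriv (M+1) v x *
        (ν * iteratedDeriv (M+3) v x - iteratedDeriv (M+2) (fun y => f (v y)) x)
      = ν * (∫ x in (0:ℝ)..1, iteratedDeriv (M+1) v x * iteratedDeriv (M+3) v x)
        - ∫ x in (0:ℝ)..1, iteratedDeriv (M+1) v x * iteratedDeriv (M+2) (fun y => f (v y)) x := by
    rw [← intervalIntegral.integral_const_mul, ← intervalIntegral.integral_sub]
    · congr 1; ext x; ring
    · exact Continuous.intervalIntegrable (by fun_prop) _ _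
    · exact Continuous.intervalIntegrable (by fun_prop) _ _
  simp only [add_assoc, Nat.reduceAdd] at e1 e2
  rw [e0, e1, e2, e3]
  set Q := ∫ x in (0:ℝ)..1, iteratedDeriv (M+2) v x * iteratedDeriv (M+1) (fun y => f (v y)) x
  have cs' : Q ^ 2 ≤ bgB v (M+2) * ((C+1) * bgB v (M+1)) := by
    refine cs.trans (mul_le_mul_of_nonneg_left ?_ b2)
    refine le_trans h1 ?_
    nlinarith
  have hq : 2 * Q ≤ ν * bgB v (M+2) + (C+1) / ν * bgB v (M+1) := by
    have p : 0 ≤ ν * bgB v (M+2) + (C+1) / ν * bgB v (M+1) := by positivity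
    apply le_of_sq_le_sq _ p
    have : ν * bgB v (M+2) * ((C+1) / ν * bgB v (M+1)) = bgB v (M+2) * ((C+1) * bgB v (M+1)) := by
      field_simp
    nlinarith [sq_nonneg (ν * bgB v (M+2) - (C+1) / ν * bgB v (M+1))]
  linarith

/-- The ODE comparison, for a positive function. -/
lemma bg_ode_pos {p κ C ν t : ℝ} (hp : 0 < p) (hκ : 0 < κ) (hC : 0 < C) (hν : 0 < ν) (ht : 0 < t)
    {y y' : ℝ → ℝ} (hy : ∀ s, 0 < s → HasDerivAt y (y' s) s)
    (hpos : ∀ s, 0 < s → s ≤ t → 0 < y s)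
    (hin : ∀ s, 0 < s → s ≤ t → y' s ≤ - ν * (κ * (y s ^ (1 + p))) + C / ν * y s) :
    p * κ / (2 + p * C) * (min ν t) ^ 2 ≤ y t ^ (-p) := by
  set c := p * C / ν with hc
  have hc0 : 0 < c := by positivity
  set a := κ / C * ν ^ 2 with ha
  have ha0 : 0 < a := by positivity
  set G : ℝ → ℝ := fun s => Real.exp (c * s) * (y s ^ (-p) - a) with hG
  have hGd : ∀ s, 0 < s → s ≤ t → HasDerivAt G
      (Real.exp (c * s) * c * (y s ^ (-p) - a) + Real.exp (c * s) *
        (y' s * (-p) * y s ^ (-p - 1))) s := by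
    intro s h0 h1
    have d1 : HasDerivAt (fun s => Real.exp (c * s)) (Real.exp (c * s) * c) s := by
      simpa using ((hasDerivAt_id s).const_mul c).exp
    have d2 := (hy s h0).rpow_const (p := -p) (Or.inl (hpos s h0 h1).ne')
    exact d1.mul (d2.sub_const a)
  have hmono : MonotoneOn G (Icc (t/2) t) := by
    apply monotoneOn_of_deriv_nonneg (convex_Icc _ _)
    · intro s hs
      exact (hGd s (by linarith [hs.1]) hs.2).continuousAt.continuousWithinAt
    · intro s hs
      rw [interior_Icc] at hs
      exact (hGd s (by linarith [hs.1]) hs.2.le).differentiableAt.differentiableWithinAt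
    · intro s hs
      rw [interior_Icc] at hs
      have h0 : 0 < s := by linarith [hs.1]
      rw [(hGd s h0 hs.2.le).deriv]
      have hyp := hpos s h0 hs.2.le
      have hi := hin s h0 hs.2.le
      have e : Real.exp (c * s) * c * (y s ^ (-p) - a) + Real.exp (c * s) *
        (y' s * (-p) * y s ^ (-p - 1)) = Real.exp (c * s) *
          (c * (y s ^ (-p) - a) - p * (y' s * y s ^ (-p - 1))) := by ring
      rw [e]
      apply mul_nonneg (Real.exp_pos _).le
      have hq : 0 < y s ^ (-p - 1) := Real.rpow_pos_of_pos hyp _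
      have h1 := mul_le_mul_of_nonneg_right hi hq.le
      have e1 : y s ^ (1 + p) * y s ^ (-p - 1) = 1 := by
        rw [← Real.rpow_add hyp]; ring_nf; simp
      have e2 : y s * y s ^ (-p - 1) = y s ^ (-p) := by
        nth_rewrite 1 [← Real.rpow_one (y s)]
        rw [← Real.rpow_add hyp]; ring_nf
      have e3 : (- ν * (κ * (y s ^ (1 + p))) + C / ν * y s) * y s ^ (-p - 1)
          = - ν * κ + C / ν * y s ^ (-p) := by
        linear_combination (- ν * κ) * e1 + (C / ν) * e2
      rw [e3] at h1
      have e4 : c * a = p * (ν * κ) := by rw [hc, ha]; field_simp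
      have e5 : c * y s ^ (-p) = p * (C / ν * y s ^ (-p)) := by rw [hc]; ring
      have := mul_le_mul_of_nonneg_left h1 hp.le
      rw [mul_sub, e4, e5]
      linarith
  have h1 := hmono (left_mem_Icc.mpr (by linarith)) (right_mem_Icc.mpr (by linarith))
    (by linarith : t/2 ≤ t)
  have hz : 0 < y (t/2) ^ (-p) := Real.rpow_pos_of_pos (hpos _ (by linarith) (by linarith)) _
  simp only [hG] at h1
  set Z := y t ^ (-p) with hZ
  set E := Real.exp (c * (t/2)) with hE
  have hEp : 0 < E := Real.exp_pos _
  have e1 : Real.exp (c * t) = E * E := by rw [hE, ← Real.exp_add]; ring_nf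
  rw [e1] at h1
  have h2 : -a ≤ E * (Z - a) := by
    have : E * (-a) ≤ E * (E * (Z - a)) := by
      refine le_trans ?_ (h1.trans (le_of_eq (by ring)))
      exact mul_le_mul_of_nonneg_left (by linarith) hEp.le
    exact le_of_mul_le_mul_left this hEp
  have hE1 : 1 + c * (t/2) ≤ E := by rw [hE, add_comm]; exact Real.add_one_le_exp _
  have h3 : a * (c * (t/2)) ≤ (1 + c * (t/2)) * Z := by
    by_cases hZa : a ≤ Z
    · have : 0 ≤ c * (t/2) := by positivity
      nlinarith
    · push Not at hZa
      nlinarith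
  have h4 : a * (c * (t/2)) = p * κ * (ν * (t/2)) := by rw [ha, hc]; field_simp
  rw [h4] at h3
  have hZ0 : 0 < Z := Real.rpow_pos_of_pos (hpos _ ht le_rfl) _
  set μ := min ν t with hμ
  have m0 : 0 < μ := lt_min hν ht
  have m1 : μ ≤ ν := min_le_left _ _
  have m2 : μ ≤ t := min_le_right _ _
  have h5 : p * κ * (ν * (ν * t)) ≤ (2 * ν + p * C * t) * Z := by
    have : ν * ((1 + c * (t/2)) * Z) * 2 = (2 * ν + p * C * t) * Z := by rw [hc]; field_simp
    nlinarith
  rw [div_mul_eq_mul_div, div_le_iff₀ (by positivity)]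
  have h6 : (2 * ν + p * C * t) * μ ≤ (2 + p * C) * (ν * t) := by
    have a1 : ν * μ ≤ ν * t := mul_le_mul_of_nonneg_left m2 hν.le
    have a2 : (p * C) * (t * μ) ≤ (p * C) * (t * ν) :=
      mul_le_mul_of_nonneg_left (mul_le_mul_of_nonneg_left m1 ht.le) (by positivity)
    linarith
  have h7 : p * κ * μ ^ 2 * (ν * t) ≤ Z * (2 + p * C) * (ν * t) := by
    calc p * κ * μ ^ 2 * (ν * t) ≤ p * κ * (ν * μ) * (ν * t) := by
          rw [sq]; gcongr
      _ = p * κ * (ν * (ν * t)) * μ := by ring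
      _ ≤ (2 * ν + p * C * t) * Z * μ := mul_le_mul_of_nonneg_right h5 m0.le
      _ = ((2 * ν + p * C * t) * μ) * Z := by ring
      _ ≤ ((2 + p * C) * (ν * t)) * Z := mul_le_mul_of_nonneg_right h6 hZ0.le
      _ = _ := by ring
  exact le_of_mul_le_mul_right h7 (by positivity)

lemma bg_ode (M : ℕ) (K C : ℝ) (hK : 0 < K) (hC : 0 < C) : ∃ C' > 0, ∀ ν, 0 < ν →
    ∀ y y' b : ℝ → ℝ, (∀ s, 0 < s → HasDerivAt y (y' s) s) → (∀ s, 0 < s → 0 ≤ y s) →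
    (∀ s, 0 < s → 0 ≤ b s) →
    (∀ s, 0 < s → y s ^ (2*M+3) ≤ K * b s ^ (2*M+1)) →
    (∀ s, 0 < s → y' s ≤ - ν * b s + C / ν * y s) → ∀ t, 0 < t →
    y t ≤ C' * max (ν ^ (-(2 * (M:ℝ) + 1))) (t ^ (-(2 * (M:ℝ) + 1))) := by
  set q : ℝ := 2 * (M:ℝ) + 1 with hq
  have hq0 : 0 < q := by positivity
  set p : ℝ := 2 / q with hp
  have hp0 : 0 < p := by positivity
  set κ : ℝ := (K ^ (q⁻¹))⁻¹ with hκ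
  have hκ0 : 0 < κ := by positivity
  set A := p * κ / (2 + p * C) with hA
  have hA0 : 0 < A := by positivity
  refine ⟨(A⁻¹) ^ (q/2), by positivity, fun ν hν y y' b hy hy0 hb0 hyb hin t ht => ?_⟩
  have hmax : 0 ≤ max (ν ^ (-q)) (t ^ (-q)) := le_max_of_le_left (by positivity)
  rcases (hy0 t ht).eq_or_lt with h0 | h0
  · rw [← h0]; positivity
  have hpos : ∀ s, 0 < s → s ≤ t → 0 < y s := by
    intro s hs hst
    set c := C / ν
    have hd : ∀ r, 0 < r → HasDerivAt (fun r => Real.exp (-c * r) * y r)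
        (Real.exp (-c * r) * (-c) * y r + Real.exp (-c * r) * y' r) r := by
      intro r hr
      have d1 : HasDerivAt (fun s => Real.exp (-c * s)) (Real.exp (-c * r) * (-c)) r := by
        simpa using ((hasDerivAt_id r).const_mul (-c)).exp
      exact d1.mul (hy r hr)
    have hanti : AntitoneOn (fun r => Real.exp (-c * r) * y r) (Icc s t) := by
      apply antitoneOn_of_deriv_nonpos (convex_Icc _ _)
      · intro r hr
        exact (hd r (by linarith [hr.1])).continuousAt.continuousWithinAt
      · intro r hr
        rw [interior_Icc] at hr
        exact (hd r (by linarith [hr.1])).differentiableAt.differentiableWithinAt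
      · intro r hr
        rw [interior_Icc] at hr
        have hr0 : 0 < r := by linarith [hr.1]
        rw [(hd r hr0).deriv]
        have h1 := hin r hr0
        have h2 := mul_nonneg hν.le (hb0 r hr0)
        have h3 := Real.exp_pos (-c * r)
        have : Real.exp (-c * r) * (-c) * y r + Real.exp (-c * r) * y' r
          = Real.exp (-c * r) * (y' r - c * y r) := by ring
        rw [this]
        exact mul_nonpos_of_nonneg_of_nonpos h3.le (by linarith)
    have h1 := hanti (left_mem_Icc.mpr hst) (right_mem_Icc.mpr hst) hst
    simp only at h1
    have h2 : 0 < Real.exp (-c * t) * y t := by positivity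
    exact pos_of_mul_pos_right (h2.trans_le h1) (Real.exp_pos _).le
  have hmain := bg_ode_pos hp0 hκ0 hC hν ht hy hpos (by
    intro s hs hst
    refine (hin s hs).trans ?_
    have hb := hb0 s hs
    have hyp := hpos s hs hst
    have h1 : κ * y s ^ (1 + p) ≤ b s := by
      have h2 := Real.rpow_le_rpow (by positivity) (hyb s hs) (inv_nonneg.mpr hq0.le)
      rw [Real.mul_rpow hK.le (by positivity), ← Real.rpow_natCast, ← Real.rpow_natCast,
        ← Real.rpow_mul hyp.le, ← Real.rpow_mul hb] at h2
      have e1 : ((2*M+1 : ℕ) : ℝ) * q⁻¹ = 1 := by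
        push_cast; rw [← hq]; field_simp
      have e2 : ((2*M+3 : ℕ) : ℝ) * q⁻¹ = 1 + p := by
        have : ((2*M+3 : ℕ) : ℝ) = q + 2 := by rw [hq]; push_cast; ring
        rw [this, hp]; field_simp
      rw [e1, e2, Real.rpow_one] at h2
      rw [hκ, inv_mul_le_iff₀ (by positivity)]
      exact h2
    have := mul_le_mul_of_nonneg_left h1 hν.le
    linarith)
  rw [← hA] at hmain
  set μ := min ν t with hμ
  have m0 : 0 < μ := lt_min hν ht
  have h1 : y t ^ p ≤ A⁻¹ * (μ ^ 2)⁻¹ := by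
    rw [Real.rpow_neg h0.le] at hmain
    rw [← mul_inv]
    exact (le_inv_comm₀ (by positivity) (by positivity)).mp hmain
  have h2 := Real.rpow_le_rpow (by positivity) h1 (by positivity : 0 ≤ q/2)
  rw [← Real.rpow_mul h0.le, Real.mul_rpow (by positivity) (by positivity)] at h2
  have e1 : p * (q/2) = 1 := by rw [hp]; field_simp
  have e2 : ((μ ^ 2)⁻¹) ^ (q/2) = μ ^ (-q) := by
    rw [← Real.rpow_natCast, ← Real.rpow_neg m0.le, ← Real.rpow_mul m0.le]
    congr 1; push_cast; ring
  rw [e1, Real.rpow_one, e2] at h2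
  refine h2.trans (mul_le_mul_of_nonneg_left ?_ (by positivity))
  rcases min_choice ν t with h | h
  · rw [hμ, h]; exact le_max_left _ _
  · rw [hμ, h]; exact le_max_right _ _

/-! ### Space-time calculus on the open half plane -/

abbrev bgΩ : Set (ℝ × ℝ) := Ioi (0:ℝ) ×ˢ univ

lemma bgΩ_open : IsOpen bgΩ := isOpen_Ioi.prod isOpen_univ

noncomputable def bgX (F : ℝ × ℝ → ℝ) (p : ℝ × ℝ) : ℝ := fderiv ℝ F p (0, 1)
noncomputable def bgT (F : ℝ × ℝ → ℝ) (p : ℝ × ℝ) : ℝ := fderiv ℝ F p (1, 0)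

lemma bgX_smooth {F : ℝ × ℝ → ℝ} (hF : ContDiffOn ℝ (⊤ : ℕ∞) F bgΩ) :
    ContDiffOn ℝ (⊤ : ℕ∞) (bgX F) bgΩ :=
  (hF.fderiv_of_isOpen bgΩ_open (by simp)).clm_apply contDiffOn_const

lemma bgT_smooth {F : ℝ × ℝ → ℝ} (hF : ContDiffOn ℝ (⊤ : ℕ∞) F bgΩ) :
    ContDiffOn ℝ (⊤ : ℕ∞) (bgT F) bgΩ :=
  (hF.fderiv_of_isOpen bgΩ_open (by simp)).clm_apply contDiffOn_const

lemma bgXk_smooth {F : ℝ × ℝ → ℝ} (hF : ContDiffOn ℝ (⊤ : ℕ∞) F bgΩ) (k : ℕ) :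
    ContDiffOn ℝ (⊤ : ℕ∞) (bgX^[k] F) bgΩ := by
  induction k with
  | zero => simpa using hF
  | succ k ih => rw [Function.iterate_succ_apply']; exact bgX_smooth ih

lemma bg_diffAt {F : ℝ × ℝ → ℝ} (hF : ContDiffOn ℝ (⊤ : ℕ∞) F bgΩ) {p : ℝ × ℝ} (hp : p ∈ bgΩ) :
    ContDiffAt ℝ (⊤ : ℕ∞) F p := hF.contDiffAt (bgΩ_open.mem_nhds hp)

lemma bgX_hasDeriv {F : ℝ × ℝ → ℝ} (hF : ContDiffOn ℝ (⊤ : ℕ∞) F bgΩ) {t : ℝ} (ht : 0 < t) (x : ℝ) :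
    HasDerivAt (fun y => F (t, y)) (bgX F (t, x)) x := by
  have h1 := ((bg_diffAt hF (p := (t,x)) ⟨ht, trivial⟩).differentiableAt (by simp)).hasFDerivAt
  have h2 : HasDerivAt (fun y : ℝ => (t, y)) ((0:ℝ), (1:ℝ)) x :=
    (hasDerivAt_const x t).prodMk (hasDerivAt_id x)
  exact h1.comp_hasDerivAt x h2

lemma bgT_hasDeriv {F : ℝ × ℝ → ℝ} (hF : ContDiffOn ℝ (⊤ : ℕ∞) F bgΩ) {t : ℝ} (ht : 0 < t) (x : ℝ) :
    HasDerivAt (fun s => F (s, x)) (bgT F (t, x)) t := by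
  have h1 := ((bg_diffAt hF (p := (t,x)) ⟨ht, trivial⟩).differentiableAt (by simp)).hasFDerivAt
  have h2 : HasDerivAt (fun s : ℝ => (s, x)) ((1:ℝ), (0:ℝ)) t :=
    (hasDerivAt_id t).prodMk (hasDerivAt_const t x)
  exact h1.comp_hasDerivAt t h2

lemma bgXk_eq {F : ℝ × ℝ → ℝ} (hF : ContDiffOn ℝ (⊤ : ℕ∞) F bgΩ) {t : ℝ} (ht : 0 < t) (k : ℕ) :
    ∀ x, bgX^[k] F (t, x) = iteratedDeriv k (fun y => F (t, y)) x := by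
  induction k with
  | zero => intro x; simp
  | succ k ih =>
    intro x
    rw [Function.iterate_succ_apply', iteratedDeriv_succ, ← funext ih]
    exact (bgX_hasDeriv (bgXk_smooth hF k) ht x).deriv.symm

lemma bg_fderiv_apply {F : ℝ × ℝ → ℝ} (hF : ContDiffOn ℝ (⊤ : ℕ∞) F bgΩ) {p : ℝ × ℝ} (hp : p ∈ bgΩ)
    (a b : ℝ × ℝ) : fderiv ℝ (fun q => fderiv ℝ F q a) p b = fderiv ℝ (fderiv ℝ F) p b a := by
  have h1 : DifferentiableAt ℝ (fderiv ℝ F) p :=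
    ((hF.fderiv_of_isOpen (m := (⊤ : ℕ∞)) bgΩ_open (by simp)).contDiffAt
      (bgΩ_open.mem_nhds hp)).differentiableAt (by simp)
  rw [fderiv_clm_apply h1 (differentiableAt_const a)]
  simp

lemma bg_comm {F : ℝ × ℝ → ℝ} (hF : ContDiffOn ℝ (⊤ : ℕ∞) F bgΩ) {p : ℝ × ℝ} (hp : p ∈ bgΩ) :
    bgT (bgX F) p = bgX (bgT F) p := by
  have h := (bg_diffAt hF hp).isSymmSndFDerivAt (by
    simp only [minSmoothness_of_isRCLikeNormedField]
    exact WithTop.coe_le_coe.mpr le_top)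
  change fderiv ℝ (fun q => fderiv ℝ F q (0,1)) p (1,0) = fderiv ℝ (fun q => fderiv ℝ F q (1,0)) p (0,1)
  rw [bg_fderiv_apply hF hp, bg_fderiv_apply hF hp]
  exact h _ _

lemma bgX_congr {F G : ℝ × ℝ → ℝ} (h : EqOn F G bgΩ) : EqOn (bgX F) (bgX G) bgΩ := by
  intro p hp
  unfold bgX
  rw [Filter.EventuallyEq.fderiv_eq (h.eventuallyEq_of_mem (bgΩ_open.mem_nhds hp))]

lemma bg_comm_k {F : ℝ × ℝ → ℝ} (hF : ContDiffOn ℝ (⊤ : ℕ∞) F bgΩ) (k : ℕ) :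
    EqOn (bgT (bgX^[k] F)) (bgX^[k] (bgT F)) bgΩ := by
  induction k with
  | zero => intro p _; rfl
  | succ k ih =>
    intro p hp
    rw [Function.iterate_succ_apply', Function.iterate_succ_apply',
      bg_comm (bgXk_smooth hF k) hp]
    exact bgX_congr ih hp

lemma bg_deriv_integral {G : ℝ × ℝ → ℝ} (hG : ContDiffOn ℝ (⊤ : ℕ∞) G bgΩ) {t : ℝ} (ht : 0 < t) :
    HasDerivAt (fun s => ∫ x in (0:ℝ)..1, G (s, x)) (∫ x in (0:ℝ)..1, bgT G (t, x)) t := by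
  have hcont : ∀ {H : ℝ × ℝ → ℝ}, ContDiffOn ℝ (⊤ : ℕ∞) H bgΩ → ∀ s, 0 < s →
      Continuous (fun x => H (s, x)) := by
    intro H hH s hs
    exact hH.continuousOn.comp_continuous (by fun_prop) (fun x => ⟨hs, trivial⟩)
  have hK : IsCompact (Icc (t/2) (2*t) ×ˢ Icc (0:ℝ) 1) := isCompact_Icc.prod isCompact_Icc
  obtain ⟨C, hC⟩ := hK.exists_bound_of_continuousOn (f := bgT G)
    ((bgT_smooth hG).continuousOn.mono (by
      rintro ⟨a, b⟩ ⟨h1, _⟩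
      exact ⟨lt_of_lt_of_le (by linarith : 0 < t/2) h1.1, trivial⟩))
  refine (intervalIntegral.hasDerivAt_integral_of_dominated_loc_of_deriv_le
    (F := fun s x => G (s, x)) (F' := fun s x => bgT G (s, x)) (bound := fun _ => C)
    (s := Icc (t/2) (2*t)) (Icc_mem_nhds (by linarith) (by linarith)) ?_ ?_ ?_ ?_ ?_ ?_).2
  · filter_upwards [lt_mem_nhds ht] with s hs
    exact (hcont hG s hs).aestronglyMeasurable
  · exact (hcont hG t ht).intervalIntegrable _ _
  · exact (hcont (bgT_smooth hG) t ht).aestronglyMeasurable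
  · refine Filter.Eventually.of_forall fun x hx s hs => ?_
    rw [uIoc_of_le zero_le_one] at hx
    exact hC (s, x) ⟨hs, Ioc_subset_Icc_self hx⟩
  · exact intervalIntegrable_const
  · refine Filter.Eventually.of_forall fun x hx s hs => ?_
    exact bgT_hasDeriv hG (by linarith [hs.1]) x

section sol
variable {f : ℝ → ℝ} {σ ν : ℝ} {u : ℝ → ℝ → ℝ}

lemma bg_sol_smooth (h : IsBurgersSolution f σ ν u) {t : ℝ} (ht : 0 ≤ t) :
    ContDiff ℝ (⊤ : ℕ∞) (u t) := by
  have h1 : ContDiff ℝ (⊤ : ℕ∞) (fun x : ℝ => (t, x)) := contDiff_const.prodMk contDiff_id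
  have := h.hu.comp_contDiff h1 (fun x => ⟨ht, trivial⟩)
  exact this

lemma bg_sol_U (h : IsBurgersSolution f σ ν u) :
    ContDiffOn ℝ (⊤ : ℕ∞) (Function.uncurry u) bgΩ :=
  h.hu.mono (prod_mono Ioi_subset_Ici_self le_rfl)

lemma bg_sol_T (h : IsBurgersSolution f σ ν u) {t : ℝ} (ht : 0 < t) (k : ℕ) (x : ℝ) :
    bgT (bgX^[k] (Function.uncurry u)) (t, x)
      = ν * iteratedDeriv (k+2) (u t) x - iteratedDeriv (k+1) (fun y => f (u t y)) x := by
  have hU := bg_sol_U h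
  have hv := bg_sol_smooth h ht.le
  have hw := bg_smooth_comp h.hf hv
  rw [bg_comm_k hU k (show (t,x) ∈ bgΩ from ⟨ht, trivial⟩), bgXk_eq (bgT_smooth hU) ht]
  have e : (fun y => bgT (Function.uncurry u) (t, y))
      = (fun y => ν * iteratedDeriv 2 (u t) y) - iteratedDeriv 1 (fun y => f (u t y)) := by
    ext y
    have h1 := (bgT_hasDeriv hU ht y).deriv
    have h2 := h.hpde t ht y
    have h3 : deriv (fun y => f (u t y)) y = deriv f (u t y) * deriv (u t) y :=
      ((h.hf.differentiable (by simp) (u t y)).hasDerivAt.comp y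
        (hv.differentiable (by simp) y).hasDerivAt).deriv
    simp only [Function.uncurry_apply_pair] at h1
    rw [h1] at h2
    simp only [Pi.sub_apply, h3, iteratedDeriv_succ, iteratedDeriv_zero]
    linarith
  have le : ((k : ℕ) : WithTop ℕ∞) ≤ ((⊤ : ℕ∞) : WithTop ℕ∞) := by exact_mod_cast le_top
  have ee : ∀ (w : ℝ → ℝ) (j : ℕ), iteratedDeriv k (iteratedDeriv j w) = iteratedDeriv (k+j) w := by
    intro w j
    simp only [iteratedDeriv_eq_iterate, Function.iterate_add_apply]
  rw [e, iteratedDeriv_sub, iteratedDeriv_const_mul_field, ee, ee]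
  · exact ((contDiff_const.mul (bg_smooth_it hv 2)).of_le le).contDiffAt
  · exact ((bg_smooth_it hw 1).of_le le).contDiffAt

lemma bg_sol_hasDeriv_B (h : IsBurgersSolution f σ ν u) {t : ℝ} (ht : 0 < t) (k : ℕ) :
    HasDerivAt (fun s => bgB (u s) k) (2 * ∫ x in (0:ℝ)..1, iteratedDeriv k (u t) x *
      (ν * iteratedDeriv (k+2) (u t) x - iteratedDeriv (k+1) (fun y => f (u t y)) x)) t := by
  have hU := bg_sol_U h
  have hk := bgXk_smooth hU k
  have h1 := bg_deriv_integral (hk.pow 2) ht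
  have e1 : ∀ x, bgT (fun p => bgX^[k] (Function.uncurry u) p ^ 2) (t, x)
      = 2 * (iteratedDeriv k (u t) x *
      (ν * iteratedDeriv (k+2) (u t) x - iteratedDeriv (k+1) (fun y => f (u t y)) x)) := by
    intro x
    have a1 := bgT_hasDeriv (hk.pow 2) ht x
    have a2 := (bgT_hasDeriv hk ht x).fun_pow 2
    have a3 := a1.unique a2
    rw [bg_sol_T h ht, bgXk_eq hU ht] at a3
    refine a3.trans ?_
    simp only [Function.uncurry_apply_pair]
    push_cast
    ring
  rw [← intervalIntegral.integral_const_mul]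
  simp only [e1] at h1
  refine h1.congr_of_eventuallyEq ?_
  filter_upwards [lt_mem_nhds ht] with s hs
  unfold bgB
  congr 1
  ext x
  rw [bgXk_eq hU hs]
  rfl

lemma bg_sol_hasDeriv_x (h : IsBurgersSolution f σ ν u) {t : ℝ} (ht : 0 < t) (k : ℕ) (x : ℝ) :
    HasDerivAt (fun s => iteratedDeriv k (u s) x)
      (ν * iteratedDeriv (k+2) (u t) x - iteratedDeriv (k+1) (fun y => f (u t y)) x) t := by
  have hU := bg_sol_U h
  have h1 := bgT_hasDeriv (bgXk_smooth hU k) ht x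
  rw [bg_sol_T h ht] at h1
  refine h1.congr_of_eventuallyEq ?_
  filter_upwards [lt_mem_nhds ht] with s hs
  rw [bgXk_eq hU hs]
  rfl

/-- initial bound -/
lemma bg_init_le {v : ℝ → ℝ} (hv : ContDiff ℝ (⊤ : ℕ∞) v) (hp : ∀ x, v (x + 1) = v x) (x : ℝ) :
    deriv v x ≤ sobLp 1 ⊤ v := by
  have c := bg_cont_it hv 1
  obtain ⟨C, hC⟩ := (isCompact_Icc (a := (0:ℝ)) (b := 1)).exists_bound_of_continuousOn c.continuousOn
  have hfin : eLpNorm (iteratedDeriv 1 v) ⊤ (volume.restrict (Ioc (0:ℝ) 1)) ≠ ⊤ := by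
    have : MemLp (iteratedDeriv 1 v) ⊤ (volume.restrict (Ioc (0:ℝ) 1)) := by
      refine memLp_top_of_bound c.aestronglyMeasurable C ?_
      rw [ae_restrict_iff' measurableSet_Ioc]
      exact Filter.Eventually.of_forall fun y hy => hC y (Ioc_subset_Icc_self hy)
    exact this.2.ne
  have hae : ∀ᵐ y ∂(volume : Measure ℝ), y ∈ Ioc (0:ℝ) 1 → iteratedDeriv 1 v y ≤ sobLp 1 ⊤ v := by
    rw [← ae_restrict_iff' measurableSet_Ioc]
    have h1 := ae_le_eLpNormEssSup (f := iteratedDeriv 1 v) (μ := volume.restrict (Ioc (0:ℝ) 1))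
    filter_upwards [h1] with y hy
    rw [← eLpNorm_exponent_top] at hy
    have h2 := ENNReal.toReal_mono hfin hy
    rw [toReal_enorm] at h2
    exact (le_abs_self _).trans h2
  have hopen : IsOpen (Ioo (0:ℝ) 1 ∩ {y | sobLp 1 ⊤ v < iteratedDeriv 1 v y}) :=
    isOpen_Ioo.inter (isOpen_lt continuous_const c)
  have hempty := hopen.eq_empty_of_measure_zero (μ := volume) (by
    refine measure_mono_null ?_ (ae_iff.mp hae)
    rintro y ⟨h1, h2⟩
    simp only [mem_ofPred_eq, Classical.not_imp, not_le]
    exact ⟨Ioo_subset_Ioc_self h1, h2⟩)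
  have hsub : Icc (0:ℝ) 1 ⊆ {y | iteratedDeriv 1 v y ≤ sobLp 1 ⊤ v} := by
    rw [← closure_Ioo (zero_ne_one' ℝ)]
    refine closure_minimal ?_ (isClosed_le c continuous_const)
    intro y hy
    by_contra hcon
    have : y ∈ (∅ : Set ℝ) := by
      rw [← hempty]
      refine ⟨hy, ?_⟩
      simp only [mem_ofPred_eq, not_le] at hcon ⊢
      exact hcon
    exact this
  have hper : Function.Periodic (iteratedDeriv 1 v) 1 := bg_per_it hp 1
  obtain ⟨y, hy, hxy⟩ := hper.exists_mem_Ico₀ zero_lt_one x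
  rw [← iteratedDeriv_one, hxy]
  exact hsub (Ico_subset_Icc_self hy)

lemma bg_max_second {w : ℝ → ℝ} (hw : Continuous w) {x : ℝ} (hmax : ∀ y, w y ≤ w x) :
    deriv w x = 0 ∧ deriv (deriv w) x ≤ 0 := by
  have hl : IsLocalMax w x := Filter.Eventually.of_forall hmax
  refine ⟨hl.deriv_eq_zero, ?_⟩
  by_contra hcon
  push Not at hcon
  have hmin := isLocalMin_of_deriv_deriv_pos hcon hl.deriv_eq_zero hw.continuousAt
  have he : w =ᶠ[nhds x] fun _ => w x := by
    filter_upwards [hmin, hl] with y h1 h2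
    exact le_antisymm h2 h1
  have := he.deriv.deriv.eq_of_nhds
  simp at this
  linarith

/-- maximum principle for `u_x` -/
lemma bg_maxprinciple (h : IsBurgersSolution f σ ν u) {D : ℝ} (hD : ∀ x, deriv (u 0) x ≤ D)
    {T : ℝ} (hT : 0 < T) (x : ℝ) : deriv (u T) x ≤ D := by
  by_contra hcon
  push Not at hcon
  have hper : ∀ t, Function.Periodic (iteratedDeriv 1 (u t)) 1 := fun t => bg_per_it (h.hper t) 1
  obtain ⟨x0, hx0, hxx⟩ := (hper T).exists_mem_Ico₀ zero_lt_one x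
  rw [← iteratedDeriv_one, hxx] at hcon
  set ε := (iteratedDeriv 1 (u T) x0 - D) / (2 * T) with hε
  have hε0 : 0 < ε := by apply div_pos <;> linarith
  have hεT : ε * T = (iteratedDeriv 1 (u T) x0 - D) / 2 := by rw [hε]; field_simp
  set S : Set (ℝ × ℝ) := Ici (0:ℝ) ×ˢ univ
  have hS : UniqueDiffOn ℝ S := (uniqueDiffOn_Ici 0).prod uniqueDiffOn_univ
  have hWc : ContinuousOn (fun p => fderivWithin ℝ (Function.uncurry u) S p ((0:ℝ),(1:ℝ))) S :=
    (h.hu.continuousOn_fderivWithin hS (by simp)).clm_apply continuousOn_const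
  have hWe : ∀ p ∈ S, fderivWithin ℝ (Function.uncurry u) S p ((0:ℝ),(1:ℝ))
      = iteratedDeriv 1 (u p.1) p.2 := by
    rintro ⟨t, y⟩ hp
    have h1 := ((h.hu (t,y) hp).differentiableWithinAt (by simp)).hasFDerivWithinAt
    have h2 : HasDerivAt (fun y : ℝ => (t, y)) ((0:ℝ), (1:ℝ)) y :=
      (hasDerivAt_const y t).prodMk (hasDerivAt_id y)
    have h3 := h1.comp_hasDerivAt y h2 (Filter.Eventually.of_forall fun z => ⟨hp.1, trivial⟩)
    rw [iteratedDeriv_one]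
    exact h3.deriv.symm
  have hc : ContinuousOn (fun p : ℝ × ℝ => iteratedDeriv 1 (u p.1) p.2 - ε * p.1)
      (Icc 0 T ×ˢ Icc 0 1) := by
    refine ContinuousOn.sub ?_ (by fun_prop)
    refine (hWc.congr fun p hp => (hWe p hp).symm).mono ?_
    exact prod_mono Icc_subset_Ici_self (subset_univ _)
  obtain ⟨⟨t1, x1⟩, hmem, hmax⟩ := (isCompact_Icc.prod isCompact_Icc).exists_isMaxOn
    ⟨(T, x0), ⟨⟨hT.le, le_rfl⟩, Ico_subset_Icc_self hx0⟩⟩ hc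
  have hmax' : ∀ t ∈ Icc 0 T, ∀ y, iteratedDeriv 1 (u t) y - ε * t
      ≤ iteratedDeriv 1 (u t1) x1 - ε * t1 := by
    intro t ht y
    obtain ⟨y0, hy0, hyy⟩ := (hper t).exists_mem_Ico₀ zero_lt_one y
    rw [hyy]
    exact hmax (show (t, y0) ∈ _ from ⟨ht, Ico_subset_Icc_self hy0⟩)
  have ht1 : t1 ∈ Icc 0 T := hmem.1
  have hbig := hmax' T ⟨hT.le, le_rfl⟩ x0
  have ht1pos : 0 < t1 := by
    rcases ht1.1.eq_or_lt with h0 | h0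
    · exfalso
      rw [← h0] at hbig
      have := hD x1
      rw [← iteratedDeriv_one] at this
      linarith
    · exact h0
  have hv := bg_sol_smooth h ht1pos.le
  obtain ⟨d1, d2⟩ := bg_max_second (bg_cont_it hv 1) (x := x1) (fun y => by
    linarith [hmax' t1 ht1 y])
  rw [← iteratedDeriv_succ] at d1
  rw [← iteratedDeriv_succ, ← iteratedDeriv_succ] at d2
  have hdt := bg_sol_hasDeriv_x h ht1pos 1 x1
  have hdt2 : ε ≤ ν * iteratedDeriv (1+2) (u t1) x1
      - iteratedDeriv (1+1) (fun y => f (u t1 y)) x1 := by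
    have hd : HasDerivAt (fun s => iteratedDeriv 1 (u s) x1 - ε * s)
        ((ν * iteratedDeriv (1+2) (u t1) x1
      - iteratedDeriv (1+1) (fun y => f (u t1 y)) x1) - ε) t1 := by
      simpa using hdt.fun_sub ((hasDerivAt_id t1).const_mul ε)
    by_contra hneg
    push Not at hneg
    have h1 := hd.tendsto_slope.mono_left (nhdsWithin_mono t1 (fun s (hs : s ∈ Iio t1) => ne_of_lt hs))
    have h2 := h1.eventually (gt_mem_nhds (show _ < (0:ℝ) by linarith))
    have h3 : ∀ᶠ s in nhdsWithin t1 (Iio t1), s ∈ Ioo 0 t1 := Ioo_mem_nhdsLT ht1pos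
    obtain ⟨s, hs1, hs2⟩ := (h2.and h3).exists
    rw [slope_def_field] at hs1
    have h4 := hmax' s ⟨hs2.1.le, hs2.2.le.trans ht1.2⟩ x1
    have h5 : 0 ≤ ((iteratedDeriv 1 (u s) x1 - ε * s) - (iteratedDeriv 1 (u t1) x1 - ε * t1))
        / (s - t1) := div_nonneg_of_nonpos (by linarith) (by linarith [hs2.2])
    linarith
  have hl := bg_leibniz h.hf hv 1 x1
  have hl0 := bg_leibniz (bg_smooth_it h.hf 1) hv 0 x1
  simp only [iteratedDeriv_one] at hl0
  rw [Finset.sum_range_succ, Finset.sum_range_one] at hl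
  rw [Finset.sum_range_one] at hl0
  simp only [zero_add, Nat.sub_zero, Nat.choose_self, Nat.choose_zero_right, Nat.cast_one,
    iteratedDeriv_zero, one_mul, Nat.sub_self] at hl hl0
  rw [hl, hl0, d1] at hdt2
  have hf2 := h.hconv (u t1 x1)
  rw [iteratedDeriv_succ, iteratedDeriv_one] at hf2
  have hpos : 0 ≤ deriv (deriv f) (u t1 x1) := h.hσ.le.trans hf2
  have h6 : 0 ≤ deriv (deriv f) (u t1 x1) * iteratedDeriv 1 (u t1) x1 * iteratedDeriv 1 (u t1) x1 := by
    rw [mul_assoc]; exact mul_nonneg hpos (mul_self_nonneg _)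
  have h7 : ν * iteratedDeriv (1+2) (u t1) x1 ≤ 0 := mul_nonpos_of_nonneg_of_nonpos h.hν.le d2
  linarith

lemma bg_sobLp_sq {v : ℝ → ℝ} (hv : ContDiff ℝ (⊤ : ℕ∞) v) (m : ℕ) :
    sobLp m 2 v ^ 2 = bgB v m := by
  have c := bg_cont_it hv m
  obtain ⟨C, hC⟩ := (isCompact_Icc (a := (0:ℝ)) (b := 1)).exists_bound_of_continuousOn c.continuousOn
  have hmem : MemLp (iteratedDeriv m v) 2 (volume.restrict (Ioc (0:ℝ) 1)) := by
    refine MemLp.of_bound c.aestronglyMeasurable C ?_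
    rw [ae_restrict_iff' measurableSet_Ioc]
    exact Filter.Eventually.of_forall fun y hy => hC y (Ioc_subset_Icc_self hy)
  unfold sobLp bgB
  rw [hmem.eLpNorm_eq_integral_rpow_norm (by norm_num) (by norm_num),
    intervalIntegral.integral_of_le zero_le_one]
  have hnn : 0 ≤ ∫ x in Ioc (0:ℝ) 1, ‖iteratedDeriv m v x‖ ^ (2 : ℝ≥0∞).toReal :=
    integral_nonneg fun _ => by positivity
  rw [ENNReal.toReal_ofReal (by positivity), ← Real.rpow_natCast, ← Real.rpow_mul hnn]
  simp

end sol

/-- For every integer `m ≥ 2` there is `C > 0` depending only on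
`f`, `D`, `m` such that for every `ν ∈ (0,1]` and every `t > 0`,
`‖u(t)‖_m² ≤ C max(ν^{-(2m-1)}, t^{-(2m-1)})`. -/
theorem statement5 (f : ℝ → ℝ) (σ D : ℝ) (m : ℕ) (hm : 2 ≤ m) :
    ∃ C > 0, ∀ ν, 0 < ν → ν ≤ 1 →
      ∀ u : ℝ → ℝ → ℝ, IsBurgersSolution f σ ν u → burgersD u = D →
        ∀ t, 0 < t →
          sobLp m 2 (u t) ^ 2
            ≤ C * max (ν ^ (-(2 * (m : ℝ) - 1))) (t ^ (-(2 * (m : ℝ) - 1))) := by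
  by_cases hf : ContDiff ℝ (⊤ : ℕ∞) f
  swap
  · exact ⟨1, one_pos, fun ν _ _ u hu => absurd hu.hf hf⟩
  obtain ⟨M, rfl⟩ : ∃ M, m = M + 1 := ⟨m - 1, by omega⟩
  obtain ⟨C, hC, HE⟩ := bg_energy D M f hf
  obtain ⟨C', hC', HO⟩ := bg_ode M (64 * D ^ 4 + 1) C (by positivity) hC
  refine ⟨C', hC', fun ν hν _ u hu hD t ht => ?_⟩
  have hD1 : sobLp 1 ⊤ (u 0) ≤ D := by rw [← hD]; exact le_max_right _ _
  have hD0 : 0 ≤ D := le_trans ENNReal.toReal_nonneg hD1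
  have hinit : ∀ x, deriv (u 0) x ≤ D := fun x =>
    (bg_init_le (bg_sol_smooth hu le_rfl) (hu.hper 0) x).trans hD1
  have hadm : ∀ s, 0 < s → BgAdm D (u s) := fun s hs =>
    { hv := bg_sol_smooth hu hs.le
      hp := hu.hper s
      hm := by rw [intervalIntegral.integral_of_le zero_le_one]; exact hu.hmean s hs.le
      hB := hD0
      hd := fun x => bg_maxprinciple hu hinit hs x }
  rw [bg_sobLp_sq (bg_sol_smooth hu ht.le)]
  have e : 2 * ((M + 1 : ℕ) : ℝ) - 1 = 2 * (M:ℝ) + 1 := by push_cast; ring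
  rw [e]
  refine HO ν hν (fun s => bgB (u s) (M+1)) _ (fun s => bgB (u s) (M+2))
    (fun s hs => bg_sol_hasDeriv_B hu hs (M+1)) (fun s _ => bgB_nonneg _ _)
    (fun s _ => bgB_nonneg _ _) (fun s hs => ?_) (fun s hs => ?_) t ht
  · refine ((hadm s hs).chain M).trans ?_
    have : 0 ≤ bgB (u s) (M+2) ^ (2*M+1) := pow_nonneg (bgB_nonneg _ _) _
    exact mul_le_mul_of_nonneg_right (by linarith) this
  · exact HE (u s) (hadm s hs) ν hν
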